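/- The limit distribution function F of the Calkin–Wilf tree is singular: for Lebesgue-almost every x > 0, F is differentiable at x with F′(x) = 0. -/

import Mathlib

open Filter

/-- The generations of the Calkin–Wilf tree: `CW 0 = [1/1]` is the first
generation, and each generation is obtained from the previous one by replacing
each entry `x` by `x/(x+1)` and `x+1`, in this order.  Thus the `n`-th
generation of the paper is `CW (n-1)`. -/
def CW : ℕ → List ℚ
  | 0 => [1]
  | n + 1 => (CW n).flatMap (fun x => [x / (x + 1), x + 1])

open scoped Classical in
/-- `Fcw n` is the distribution function of the `(n+1)`-st generation of the
Calkin–Wilf tree: `Fcw (n-1) x = F_n(x) = 2^(1-n) · #{j : x_j^(n) ≤ x}`. -/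
noncomputable def Fcw (n : ℕ) (x : ℝ) : ℝ :=
  ((CW n).countP (fun q => decide ((q : ℝ) ≤ x))) / 2 ^ n

open scoped Classical in
lemma Fcw_eq (n : ℕ) (x : ℝ) :
    Fcw n x = ((CW n).countP (fun q : ℚ => decide ((q : ℝ) ≤ x))) / 2 ^ n := by
  unfold Fcw
  congr 2
  generalize CW n = l
  induction l with
  | nil => simp
  | cons y l ih => 
    simp only [List.bind_eq_flatMap, List.pure_def] at ih ⊢
    simp only [List.flatMap_cons, List.countP_append, ih, List.countP_cons, List.countP_nil]
    omega

lemma CW_pos (n : ℕ) : ∀ q ∈ CW n, 0 < q := by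
  induction n with
  | zero => simp [CW]
  | succ n ih =>
    intro q hq
    simp only [CW, List.mem_flatMap] at hq
    obtain ⟨y, hy, hq⟩ := hq
    have := ih y hy
    simp only [List.mem_cons, List.not_mem_nil, or_false] at hq
    rcases hq with rfl | rfl <;> positivity

lemma CW_length (n : ℕ) : (CW n).length = 2 ^ n := by
  induction n with
  | zero => simp [CW]
  | succ n ih => simp [CW, List.length_flatMap, ih, pow_succ]

open scoped Classical in
lemma count_lt (x : ℝ) (hx1 : x < 1) (l : List ℚ) (hl : ∀ q ∈ l, 0 < q) :
    (l.flatMap (fun x : ℚ => [x / (x + 1), x + 1])).countP (fun q : ℚ => decide ((q : ℝ) ≤ x))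
      = l.countP (fun q : ℚ => decide ((q : ℝ) ≤ x / (1 - x))) := by
  induction l with
  | nil => simp
  | cons y l ih =>
    have hy : (0 : ℝ) < y := by exact_mod_cast hl y (by simp)
    have ih := ih (fun q hq => hl q (by simp [hq]))
    have h1 : ((y / (y + 1) : ℚ) : ℝ) ≤ x ↔ (y : ℝ) ≤ x / (1 - x) := by
      push_cast
      rw [div_le_iff₀ (by linarith), le_div_iff₀ (by linarith)]
      constructor <;> intro h <;> linarith
    have h2 : ¬ (((y + 1 : ℚ) : ℝ) ≤ x) := by push_cast; linarith
    simp only [List.flatMap_cons, List.countP_append, ih, List.countP_cons, List.countP_nil,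
      decide_eq_true_eq, h1, h2, if_false]
    omega

open scoped Classical in
lemma count_ge (x : ℝ) (hx1 : 1 ≤ x) (l : List ℚ) (hl : ∀ q ∈ l, 0 < q) :
    (l.flatMap (fun x : ℚ => [x / (x + 1), x + 1])).countP (fun q : ℚ => decide ((q : ℝ) ≤ x))
      = l.length + l.countP (fun q : ℚ => decide ((q : ℝ) ≤ x - 1)) := by
  induction l with
  | nil => simp
  | cons y l ih =>
    have hy : (0 : ℝ) < y := by exact_mod_cast hl y (by simp)
    have ih := ih (fun q hq => hl q (by simp [hq]))
    have h1 : ((y / (y + 1) : ℚ) : ℝ) ≤ x := by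
      push_cast
      rw [div_le_iff₀ (by linarith)]
      nlinarith
    have h2 : ((y + 1 : ℚ) : ℝ) ≤ x ↔ (y : ℝ) ≤ x - 1 := by
      push_cast; constructor <;> intro h <;> linarith
    simp only [List.flatMap_cons, List.countP_append, ih, List.countP_cons, List.countP_nil,
      decide_eq_true_eq, h1, h2, if_true, List.length_cons]
    omega

lemma Fcw_lt (n : ℕ) (x : ℝ) (hx1 : x < 1) : Fcw (n + 1) x = Fcw n (x / (1 - x)) / 2 := by
  rw [Fcw_eq, Fcw_eq, CW, count_lt x hx1 _ (CW_pos n), pow_succ, div_div]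

lemma Fcw_ge (n : ℕ) (x : ℝ) (hx1 : 1 ≤ x) :
    Fcw (n + 1) x = 1 / 2 + Fcw n (x - 1) / 2 := by
  rw [Fcw_eq, Fcw_eq, CW, count_ge x hx1 _ (CW_pos n), CW_length, pow_succ]
  push_cast
  field_simp

lemma Fcw_mono (n : ℕ) : Monotone (Fcw n) := by
  intro x y hxy
  rw [Fcw_eq, Fcw_eq]
  gcongr ?_ / _
  norm_cast
  apply List.countP_mono_left
  intro q _ hq
  simp only [decide_eq_true_eq] at hq ⊢
  exact hq.trans hxy

section
variable {F : ℝ → ℝ}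

lemma F_lt (hF : ∀ x : ℝ, 0 ≤ x → Tendsto (fun n => Fcw n x) atTop (nhds (F x)))
    (x : ℝ) (hx : 0 ≤ x) (hx1 : x < 1) : F x = F (x / (1 - x)) / 2 := by
  have h1 := (hF x hx).comp (tendsto_add_atTop_nat 1)
  have h2 := (hF (x / (1 - x)) (div_nonneg hx (by linarith))).div_const 2
  refine tendsto_nhds_unique h1 (h2.congr fun n => ?_)
  simp [Fcw_lt n x hx1]

lemma F_ge (hF : ∀ x : ℝ, 0 ≤ x → Tendsto (fun n => Fcw n x) atTop (nhds (F x)))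
    (x : ℝ) (hx1 : 1 ≤ x) : F x = 1 / 2 + F (x - 1) / 2 := by
  have h1 := (hF x (by linarith)).comp (tendsto_add_atTop_nat 1)
  have h2 := ((hF (x - 1) (by linarith)).div_const 2).const_add (1 / 2)
  refine tendsto_nhds_unique h1 (h2.congr fun n => ?_)
  simp [Fcw_ge n x hx1]

lemma F_nat (hF : ∀ x : ℝ, 0 ≤ x → Tendsto (fun n => Fcw n x) atTop (nhds (F x)))
    (k : ℕ) : F k = 1 - (1 / 2) ^ k := by
  induction k with
  | zero =>
    have := F_lt hF 0 le_rfl one_pos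
    simp at this ⊢
    linarith
  | succ k ih =>
    rw [F_ge hF _ (by push_cast; linarith [(Nat.cast_nonneg k : (0 : ℝ) ≤ k)])]
    push_cast
    rw [add_sub_cancel_right, ih]
    ring

lemma F_mediant (hF : ∀ x : ℝ, 0 ≤ x → Tendsto (fun n => Fcw n x) atTop (nhds (F x)))
    (N : ℕ) : ∀ a b c d : ℕ, a + b + c + d ≤ N → 1 ≤ b → 1 ≤ d → b * c = a * d + 1 →
      F (((a : ℝ) + c) / (b + d)) = (F (a / b) + F (c / d)) / 2 := by
  induction N with
  | zero => intro a b c d h hb; omega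
  | succ N ih =>
    intro a b c d h hb hd hdet
    have hb' : (1 : ℝ) ≤ b := by exact_mod_cast hb
    have hd' : (1 : ℝ) ≤ d := by exact_mod_cast hd
    have ha' : (0 : ℝ) ≤ a := Nat.cast_nonneg a
    have hc' : (0 : ℝ) ≤ c := Nat.cast_nonneg c
    have hdet' : (b : ℝ) * c = a * d + 1 := by exact_mod_cast hdet
    by_cases hab : b ≤ a
    · have hcd : d ≤ c := by
        by_contra hcd
        nlinarith
      obtain ⟨a, rfl⟩ := Nat.exists_eq_add_of_le hab
      obtain ⟨c, rfl⟩ := Nat.exists_eq_add_of_le hcd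
      have key := ih a b c d (by omega) hb hd (by nlinarith)
      have ha0 : (0 : ℝ) ≤ a := Nat.cast_nonneg a
      have hc0 : (0 : ℝ) ≤ c := Nat.cast_nonneg c
      push_cast
      rw [F_ge hF (((b : ℝ) + a + (d + c)) / (b + d)) (by rw [le_div_iff₀] <;> linarith),
        F_ge hF (((b : ℝ) + a) / b) (by rw [le_div_iff₀] <;> linarith),
        F_ge hF (((d : ℝ) + c) / d) (by rw [le_div_iff₀] <;> linarith)]
      have e1 : ((b : ℝ) + a + (d + c)) / (b + d) - 1 = (a + c) / (b + d) := by
        field_simp; ring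
      have e2 : ((b : ℝ) + a) / b - 1 = a / b := by field_simp; ring
      have e3 : ((d : ℝ) + c) / d - 1 = c / d := by field_simp; ring
      rw [e1, e2, e3, key]
      ring
    · push Not at hab
      have hcd : c ≤ d := by
        by_contra hcd
        push Not at hcd
        have : (a + 1) * (d + 1) ≤ b * c := Nat.mul_le_mul hab hcd
        nlinarith
      obtain ⟨b, rfl⟩ := Nat.exists_eq_add_of_le hab.le
      have hb0 : 1 ≤ b := by omega
      have hb0' : (1 : ℝ) ≤ b := by exact_mod_cast hb0
      rcases hcd.lt_or_eq with hcd | hcd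
      · obtain ⟨d, rfl⟩ := Nat.exists_eq_add_of_le hcd.le
        have hd0 : 1 ≤ d := by omega
        have hd0' : (1 : ℝ) ≤ d := by exact_mod_cast hd0
        have hc1 : 1 ≤ c := by
          rcases Nat.eq_zero_or_pos c with h | h
          · subst h; simp at hdet
          · exact h
        rcases Nat.eq_zero_or_pos a with h0 | h0
        all_goals
          have key := ih a b c d (by omega) hb0 hd0 (by nlinarith)
          push_cast
          rw [F_lt hF (((a : ℝ) + c) / (a + b + (c + d))) (by positivity)
              (by rw [div_lt_one] <;> linarith),
            F_lt hF ((a : ℝ) / (a + b)) (by positivity) (by rw [div_lt_one] <;> linarith),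
            F_lt hF ((c : ℝ) / (c + d)) (by positivity) (by rw [div_lt_one] <;> linarith)]
          have T : ∀ u v : ℝ, 0 ≤ u → 1 ≤ v → u / (u + v) / (1 - u / (u + v)) = u / v := by
            intro u v hu hv
            have h1 : u + v ≠ 0 := by positivity
            have h2 : 1 - u / (u + v) = v / (u + v) := by field_simp; ring
            rw [h2]; field_simp
          have e1 : (a : ℝ) + b + (c + d) = (a + c) + (b + d) := by ring
          rw [e1, T _ _ (by linarith) (by linarith), T _ _ (by linarith) (by linarith),
            T _ _ (by linarith) (by linarith), key]
          ring
      · subst hcd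
        have h1 : c * b = 1 := by nlinarith
        have hc1 : c = 1 := Nat.eq_one_of_mul_eq_one_right h1
        have hb1 : b = 1 := by subst hc1; omega
        subst hc1 hb1
        push_cast
        rw [F_lt hF (((a : ℝ) + 1) / (a + 1 + 1)) (by positivity)
              (by rw [div_lt_one] <;> linarith),
            F_lt hF ((a : ℝ) / (a + 1)) (by positivity) (by rw [div_lt_one] <;> linarith)]
        have e1 : ((a : ℝ) + 1) / (a + 1 + 1) / (1 - (a + 1) / (a + 1 + 1)) = (a + 1 : ℕ) := by
          have : 1 - ((a : ℝ) + 1) / (a + 1 + 1) = 1 / (a + 1 + 1) := by field_simp; ring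
          rw [this]; push_cast; field_simp
        have e2 : (a : ℝ) / (a + 1) / (1 - a / (a + 1)) = a := by
          have : 1 - (a : ℝ) / (a + 1) = 1 / (a + 1) := by field_simp; ring
          rw [this]; field_simp
        have e3 : (1 : ℝ) / 1 = (1 : ℕ) := by norm_num
        rw [e1, e2, e3, F_nat hF, F_nat hF, F_nat hF]
        ring

lemma F_mono (hF : ∀ x : ℝ, 0 ≤ x → Tendsto (fun n => Fcw n x) atTop (nhds (F x))) :
    MonotoneOn F (Set.Ici 0) := by
  intro x hx y hy hxy
  exact le_of_tendsto_of_tendsto' (hF x hx) (hF y hy) (fun n => Fcw_mono n hxy)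

/-- The straddle lemma. -/
lemma straddle {l x : ℝ} (h : HasDerivAt F l x) (u v : ℕ → ℝ) (hu : ∀ n, u n ≤ x)
    (hv : ∀ n, x ≤ v n) (huv : ∀ n, u n < v n) (hlim : Tendsto (fun n => v n - u n) atTop (nhds 0)) :
    Tendsto (fun n => (F (v n) - F (u n)) / (v n - u n)) atTop (nhds l) := by
  have hu' : Tendsto u atTop (nhds x) := by
    have : Tendsto (fun n => x - (v n - u n)) atTop (nhds x) := by simpa using hlim.const_sub x
    exact tendsto_of_tendsto_of_tendsto_of_le_of_le this tendsto_const_nhds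
      (fun n => by dsimp; linarith [hv n]) hu
  have hv' : Tendsto v atTop (nhds x) := by
    have : Tendsto (fun n => x + (v n - u n)) atTop (nhds x) := by simpa using hlim.const_add x
    exact tendsto_of_tendsto_of_tendsto_of_le_of_le tendsto_const_nhds this
      hv (fun n => by dsimp; linarith [hu n])
  rw [Metric.tendsto_atTop']
  intro ε hε
  have hev := (hasDerivAt_iff_isLittleO.1 h).bound (half_pos hε)
  obtain ⟨N, hN⟩ := eventually_atTop.1 ((hu'.eventually hev).and (hv'.eventually hev))
  refine ⟨N, fun n hn => ?_⟩
  obtain ⟨h1, h2⟩ := hN n hn.le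
  simp only [Real.norm_eq_abs, smul_eq_mul] at h1 h2
  rw [abs_of_nonpos (sub_nonpos.2 (hu n))] at h1
  rw [abs_of_nonneg (sub_nonneg.2 (hv n))] at h2
  have hpos := sub_pos.2 (huv n)
  rw [abs_le] at h1 h2
  have : |(F (v n) - F (u n)) / (v n - u n) - l| ≤ ε / 2 := by
    rw [abs_le, le_sub_iff_add_le, sub_le_iff_le_add, le_div_iff₀ hpos, div_le_iff₀ hpos]
    constructor <;> nlinarith
  rw [Real.dist_eq]
  linarith

open scoped Classical in
/-- One step of the Stern–Brocot subdivision towards `x`. -/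
noncomputable def sbStep (x : ℝ) (t : ℕ × ℕ × ℕ × ℕ) : ℕ × ℕ × ℕ × ℕ :=
  if x < ((t.1 : ℝ) + t.2.2.1) / (t.2.1 + t.2.2.2) then
    (t.1, t.2.1, t.1 + t.2.2.1, t.2.1 + t.2.2.2)
  else (t.1 + t.2.2.1, t.2.1 + t.2.2.2, t.2.2.1, t.2.2.2)

lemma cw_deriv_zero (hF : ∀ x : ℝ, 0 ≤ x → Tendsto (fun n => Fcw n x) atTop (nhds (F x)))
    {l x : ℝ} (hx : 0 < x) (h : HasDerivAt F l x) : l = 0 := by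
  -- existence of the sequence
  obtain ⟨a, b, c, d, hb, hd, hdet, hax, hxc, hFd, hsum, hstep⟩ :
      ∃ a b c d : ℕ → ℕ, (∀ n, 1 ≤ b n) ∧ (∀ n, 1 ≤ d n) ∧
        (∀ n, b n * c n = a n * d n + 1) ∧ (∀ n, (a n : ℝ) / b n ≤ x) ∧
        (∀ n, x ≤ (c n : ℝ) / d n) ∧
        (∀ n, F (c n / d n) - F (a n / b n) = (F (c 0 / d 0) - F (a 0 / b 0)) * (1 / 2) ^ n) ∧
        (∀ n, n ≤ b n + d n) ∧
        (∀ n, (b (n + 1) = b n ∧ d (n + 1) = b n + d n) ∨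
          (b (n + 1) = b n + d n ∧ d (n + 1) = d n)) := by
    let t : ℕ → ℕ × ℕ × ℕ × ℕ := fun n => (sbStep x)^[n] (⌊x⌋₊, 1, ⌊x⌋₊ + 1, 1)
    have ht : ∀ n, t (n + 1) = sbStep x (t n) := fun n => Function.iterate_succ_apply' _ _ _
    have inv : ∀ n, 1 ≤ (t n).2.1 ∧ 1 ≤ (t n).2.2.2 ∧
        (t n).2.1 * (t n).2.2.1 = (t n).1 * (t n).2.2.2 + 1 ∧
        ((t n).1 : ℝ) / (t n).2.1 ≤ x ∧ x ≤ ((t n).2.2.1 : ℝ) / (t n).2.2.2 ∧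
        F ((t n).2.2.1 / (t n).2.2.2) - F ((t n).1 / (t n).2.1) =
          (F ((t 0).2.2.1 / (t 0).2.2.2) - F ((t 0).1 / (t 0).2.1)) * (1 / 2) ^ n ∧
        n ≤ (t n).2.1 + (t n).2.2.2 := by
      intro n
      induction n with
      | zero =>
        refine ⟨le_rfl, le_rfl, ?_, ?_, ?_, by simp, by simp⟩
        · simp [t]
        · simpa [t] using Nat.floor_le hx.le
        · simpa [t] using (Nat.lt_floor_add_one x).le
      | succ n ih =>
        rw [ht n]
        obtain ⟨h1, h2, h3, h4, h5, h6, h7⟩ := ih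
        have hm := F_mediant hF _ _ _ _ _ le_rfl h1 h2 h3
        generalize (F ((t 0).2.2.1 / (t 0).2.2.2) - F ((t 0).1 / (t 0).2.1)) = K at *
        generalize t n = s at *
        obtain ⟨a, b, c, d⟩ := s
        dsimp only at *
        unfold sbStep
        dsimp only
        split_ifs with hlt
        · refine ⟨h1, by dsimp only; omega, by dsimp only; nlinarith, h4, ?_, ?_, ?_⟩
          · push_cast; exact hlt.le
          · push_cast; rw [hm, pow_succ]; linarith
          · dsimp only; omega
        · refine ⟨by dsimp only; omega, h2, by dsimp only; nlinarith, ?_, h5, ?_, ?_⟩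
          · push_cast; exact not_lt.1 hlt
          · push_cast; rw [hm, pow_succ]; linarith
          · dsimp only; omega
    refine ⟨fun n => (t n).1, fun n => (t n).2.1, fun n => (t n).2.2.1, fun n => (t n).2.2.2,
      fun n => (inv n).1, fun n => (inv n).2.1, fun n => (inv n).2.2.1, fun n => (inv n).2.2.2.1,
      fun n => (inv n).2.2.2.2.1, fun n => (inv n).2.2.2.2.2.1, fun n => (inv n).2.2.2.2.2.2, ?_⟩
    intro n
    dsimp only
    rw [ht n]
    unfold sbStep
    split_ifs
    · left; exact ⟨rfl, rfl⟩
    · right; exact ⟨rfl, rfl⟩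
  by_contra hl
  have hb' : ∀ n, (1 : ℝ) ≤ b n := fun n => by exact_mod_cast hb n
  have hd' : ∀ n, (1 : ℝ) ≤ d n := fun n => by exact_mod_cast hd n
  have hlen : ∀ n, (c n : ℝ) / d n - a n / b n = 1 / (b n * d n) := by
    intro n
    have := hb' n
    have := hd' n
    have h3 : (b n : ℝ) * c n = a n * d n + 1 := by exact_mod_cast hdet n
    rw [div_sub_div _ _ (by positivity) (by positivity)]
    rw [div_eq_div_iff (by positivity) (by positivity)]
    linear_combination (b n : ℝ) * d n * h3
  have hlim : Tendsto (fun n => (c n : ℝ) / d n - a n / b n) atTop (nhds 0) := by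
    have h0 : Tendsto (fun n : ℕ => 2 * (1 / (n : ℝ))) atTop (nhds 0) := by
      simpa using (tendsto_one_div_atTop_nhds_zero_nat (𝕜 := ℝ)).const_mul 2
    refine tendsto_of_tendsto_of_tendsto_of_le_of_le' tendsto_const_nhds h0 ?_ ?_
    · refine Eventually.of_forall fun n => ?_
      rw [hlen]; positivity
    · filter_upwards [eventually_gt_atTop 0] with n hn
      have hn' : (0 : ℝ) < n := by exact_mod_cast hn
      have h1 := hb' n
      have h2 := hd' n
      have h3 : (n : ℝ) ≤ b n + d n := by exact_mod_cast hsum n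
      rw [hlen, mul_one_div, div_le_div_iff₀ (by positivity) hn']
      nlinarith [mul_nonneg (sub_nonneg.2 h1) (sub_nonneg.2 h2)]
  have hS := straddle h (fun n => (a n : ℝ) / b n) (fun n => (c n : ℝ) / d n) hax hxc
    (fun n => by
      have := hlen n
      have h1 := hb' n
      have h2 := hd' n
      have : (0 : ℝ) < 1 / (b n * d n) := by positivity
      linarith) hlim
  have hR := (hS.comp (tendsto_add_atTop_nat 1)).div hS hl
  rw [div_self hl] at hR
  have hK : F (c 0 / d 0) - F (a 0 / b 0) ≠ 0 := by
    intro hK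
    apply hl
    refine tendsto_nhds_unique hS (tendsto_const_nhds.congr fun n => ?_)
    rw [hFd, hK]; simp
  have hev : ∀ᶠ n in atTop, |(b (n + 1) * d (n + 1) : ℝ) - 2 * (b n * d n)| ≤
      1 / 4 * (b n * d n) := by
    filter_upwards [Metric.tendsto_nhds.1 hR (1 / 8) (by norm_num)] with n hn
    have h1 := hb' n
    have h2 := hd' n
    have h3 := hb' (n + 1)
    have h4 := hd' (n + 1)
    have e : ((F (c (n + 1) / d (n + 1)) - F (a (n + 1) / b (n + 1))) /
        ((c (n + 1) : ℝ) / d (n + 1) - a (n + 1) / b (n + 1))) /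
        ((F (c n / d n) - F (a n / b n)) / ((c n : ℝ) / d n - a n / b n)) =
        (b (n + 1) * d (n + 1)) / (2 * (b n * d n)) := by
      rw [hlen, hlen, hFd (n + 1), hFd n]
      generalize F (c 0 / d 0) - F (a 0 / b 0) = K at hK
      rw [pow_succ]
      field_simp
    simp only [Pi.div_apply, Function.comp_apply, Real.dist_eq] at hn
    rw [e] at hn
    have hp : (0 : ℝ) < 2 * (b n * d n) := by positivity
    rw [abs_lt, lt_sub_iff_add_lt, sub_lt_iff_lt_add, lt_div_iff₀ hp, div_lt_iff₀ hp] at hn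
    rw [abs_le]
    constructor <;> linarith [hn.1, hn.2]
  obtain ⟨N, hN⟩ := eventually_atTop.1 hev
  have g0 := hN N le_rfl
  have g1 := hN (N + 1) (by omega)
  have h1 := hb' N
  have h2 := hd' N
  have key : ∀ p q : ℝ, 1 ≤ p → 1 ≤ q → |p * (p + q) - 2 * (p * q)| ≤ 1 / 4 * (p * q) →
      3 / 4 * q ≤ p ∧ p ≤ 5 / 4 * q := by
    intro p q hp hq hh
    rw [abs_le] at hh
    constructor
    · have : p * (3 / 4 * q) ≤ p * p := by linarith [hh.1]
      exact le_of_mul_le_mul_left this (by linarith)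
    · have : p * p ≤ p * (5 / 4 * q) := by linarith [hh.2]
      exact le_of_mul_le_mul_left this (by linarith)
  have key2 : ∀ p q : ℝ, 1 ≤ p → 1 ≤ q → |(p + q) * q - 2 * (p * q)| ≤ 1 / 4 * (p * q) →
      3 / 4 * p ≤ q ∧ q ≤ 5 / 4 * p := by
    intro p q hp hq hh
    refine key q p hq hp ?_
    have e1 : q * (q + p) - 2 * (q * p) = (p + q) * q - 2 * (p * q) := by ring
    rw [e1, mul_comm q p]; exact hh
  rcases hstep N with ⟨e1, e2⟩ | ⟨e1, e2⟩ <;> rcases hstep (N + 1) with ⟨e3, e4⟩ | ⟨e3, e4⟩ <;>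
    rw [e3, e4, e1, e2] at g1 <;> rw [e1, e2] at g0 <;> push_cast at g0 g1
  · have k0 := key _ _ h1 h2 g0
    have k1 := key _ _ h1 (by linarith) g1
    linarith [k0.1, k0.2, k1.1, k1.2]
  · have k0 := key _ _ h1 h2 g0
    have k1 := key2 _ _ h1 (by linarith) g1
    linarith [k0.1, k0.2, k1.1, k1.2]
  · have k0 := key2 _ _ h1 h2 g0
    have k1 := key _ _ (by linarith) h2 g1
    linarith [k0.1, k0.2, k1.1, k1.2]
  · have k0 := key2 _ _ h1 h2 g0
    have k1 := key2 _ _ (by linarith) h2 g1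
    linarith [k0.1, k0.2, k1.1, k1.2]

end

/-- The limit distribution function `F` of the Calkin–Wilf tree (the pointwise
limit of the generation distribution functions `F_n`) is singular: for
Lebesgue-almost every `x > 0`, `F` is differentiable at `x` with `F'(x) = 0`. -/
theorem calkin_wilf_limit_distribution_singular (F : ℝ → ℝ)
    (hF : ∀ x : ℝ, 0 ≤ x → Tendsto (fun n => Fcw n x) atTop (nhds (F x))) :
    ∀ᵐ x : ℝ, 0 < x → HasDerivAt F 0 x := by
  filter_upwards [(F_mono hF).ae_differentiableWithinAt_of_mem] with x hx hpos
  have hd : DifferentiableAt ℝ F x := (hx hpos.le).differentiableAt (Ici_mem_nhds hpos)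
  have := hd.hasDerivAt
  rwa [cw_deriv_zero hF hpos this] at this
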